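/- Let λ > 0, x₀ ∈ ℝⁿ, a ∈ ℝ. For every f ∈ L²(ℝⁿ, e^{-λ|x−x₀|²}) there exists a weak solution u ∈ L²(ℝⁿ, e^{-λ|x−x₀|²}) of Δu + au = f satisfying ∫ u² e^{-λ|x−x₀|²} dx ≤ (1/(8nλ²)) ∫ f² e^{-λ|x−x₀|²} dx. -/

import Mathlib

open MeasureTheory Real

noncomputable def lap {n : ℕ} (f : EuclideanSpace ℝ (Fin n) → ℝ)
    (x : EuclideanSpace ℝ (Fin n)) : ℝ :=
  ∑ i : Fin n, fderiv ℝ (fun y => fderiv ℝ f y (EuclideanSpace.single i 1)) x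
    (EuclideanSpace.single i 1)

/-- `u` is a weak solution of `Δu + a u = f` on `ℝⁿ`. -/
def IsWeakSolution {n : ℕ} (a : ℝ) (u f : EuclideanSpace ℝ (Fin n) → ℝ) : Prop :=
  ∀ ψ : EuclideanSpace ℝ (Fin n) → ℝ, ContDiff ℝ (⊤ : ℕ∞) ψ → HasCompactSupport ψ →
    ∫ x, u x * (lap ψ x + a * ψ x) = ∫ x, f x * ψ x

section helpers

variable {n : ℕ}

/-- The `i`-th partial derivative. -/
noncomputable def pd (i : Fin n) (g : EuclideanSpace ℝ (Fin n) → ℝ)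
    (x : EuclideanSpace ℝ (Fin n)) : ℝ :=
  fderiv ℝ g x (EuclideanSpace.single i 1)

lemma pd_add {i : Fin n} {g h : EuclideanSpace ℝ (Fin n) → ℝ} (hg : Differentiable ℝ g)
    (hh : Differentiable ℝ h) (x) : pd i (fun y => g y + h y) x = pd i g x + pd i h x := by
  unfold pd
  rw [fderiv_fun_add (hg x) (hh x)]; simp

lemma pd_mul {i : Fin n} {g h : EuclideanSpace ℝ (Fin n) → ℝ} (hg : Differentiable ℝ g)
    (hh : Differentiable ℝ h) (x) :
    pd i (fun y => g y * h y) x = g x * pd i h x + h x * pd i g x := by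
  unfold pd
  rw [fderiv_fun_mul (hg x) (hh x)]; simp

lemma pd_const_mul {i : Fin n} {g : EuclideanSpace ℝ (Fin n) → ℝ} (hg : Differentiable ℝ g)
    (c : ℝ) (x) : pd i (fun y => c * g y) x = c * pd i g x := by
  unfold pd
  rw [fderiv_const_mul (hg x)]; simp

lemma pd_sum {i : Fin n} {g : Fin n → EuclideanSpace ℝ (Fin n) → ℝ}
    (hg : ∀ j, Differentiable ℝ (g j)) (x) :
    pd i (fun y => ∑ j, g j y) x = ∑ j, pd i (g j) x := by
  unfold pd
  rw [fderiv_fun_sum (fun j _ => hg j x)]; simp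

lemma smooth_pd {i : Fin n} {g : EuclideanSpace ℝ (Fin n) → ℝ}
    (hg : ContDiff ℝ (⊤ : ℕ∞) g) : ContDiff ℝ (⊤ : ℕ∞) (pd i g) := by
  unfold pd
  exact (hg.fderiv_right (m := (⊤ : ℕ∞)) (by exact_mod_cast le_refl _)).clm_apply contDiff_const

lemma supp_pd {i : Fin n} {g : EuclideanSpace ℝ (Fin n) → ℝ}
    (hg : HasCompactSupport g) : HasCompactSupport (pd i g) :=
  hg.fderiv_apply ℝ _

lemma smooth_diff {g : EuclideanSpace ℝ (Fin n) → ℝ}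
    (hg : ContDiff ℝ (⊤ : ℕ∞) g) : Differentiable ℝ g :=
  hg.differentiable (by simp)

lemma integral_pd {i : Fin n} {g : EuclideanSpace ℝ (Fin n) → ℝ}
    (hg : ContDiff ℝ (⊤ : ℕ∞) g) (hs : HasCompactSupport g) : ∫ x, pd i g x = 0 := by
  have h1 : Integrable (pd i g) := (smooth_pd hg).continuous.integrable_of_hasCompactSupport
    (supp_pd hs)
  have h2 : Integrable g := hg.continuous.integrable_of_hasCompactSupport hs
  have := integral_mul_fderiv_eq_neg_fderiv_mul_of_integrable (μ := volume)
    (f := fun _ : EuclideanSpace ℝ (Fin n) => (1 : ℝ)) (g := g) (v := EuclideanSpace.single i 1)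
    (by simp) (by simp only [one_mul]; exact h1) (by simpa using h2) (by intros; fun_prop)
    (fun x _ => smooth_diff hg x)
  simpa [pd] using this

lemma pd_comm {i j : Fin n} {g : EuclideanSpace ℝ (Fin n) → ℝ}
    (hg : ContDiff ℝ (⊤ : ℕ∞) g) (x) : pd i (pd j g) x = pd j (pd i g) x := by
  have h := (hg.contDiffAt (x := x)).isSymmSndFDerivAt
    (by rw [minSmoothness_of_isRCLikeNormedField]; exact WithTop.coe_le_coe.2 le_top)
  have hd : DifferentiableAt ℝ (fderiv ℝ g) x :=
    ((hg.fderiv_right (m := (⊤ : ℕ∞)) (by exact_mod_cast le_refl _)).differentiable (by simp)) x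
  have key : ∀ a b : Fin n, pd a (pd b g) x =
      fderiv ℝ (fderiv ℝ g) x (EuclideanSpace.single a 1) (EuclideanSpace.single b 1) := by
    intro a b
    unfold pd
    rw [fderiv_clm_apply hd (by fun_prop)]
    simp
  rw [key, key, h.eq]

/-- Shifted coordinate. -/
def yc (x₀ : EuclideanSpace ℝ (Fin n)) (i : Fin n) (x : EuclideanSpace ℝ (Fin n)) : ℝ :=
  x i - x₀ i

lemma smooth_yc (x₀ : EuclideanSpace ℝ (Fin n)) (i : Fin n) :
    ContDiff ℝ (⊤ : ℕ∞) (yc x₀ i) := by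
  unfold yc; fun_prop

lemma pd_yc (x₀ : EuclideanSpace ℝ (Fin n)) (i j : Fin n) (x) :
    pd i (yc x₀ j) x = if j = i then 1 else 0 := by
  unfold pd yc
  have : HasFDerivAt (fun x : EuclideanSpace ℝ (Fin n) => x j - x₀ j)
      (EuclideanSpace.proj j : EuclideanSpace ℝ (Fin n) →L[ℝ] ℝ) x :=
    ((EuclideanSpace.proj j : EuclideanSpace ℝ (Fin n) →L[ℝ] ℝ).hasFDerivAt).sub_const _
  rw [this.fderiv]
  simp

lemma normsq_yc (x₀ x : EuclideanSpace ℝ (Fin n)) :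
    ‖x - x₀‖ ^ 2 = ∑ i, yc x₀ i x * yc x₀ i x := by
  rw [EuclideanSpace.norm_sq_eq]
  simp [yc, sq]

lemma lap_eq (g : EuclideanSpace ℝ (Fin n) → ℝ) (x) : lap g x = ∑ i, pd i (pd i g) x := rfl

lemma smooth_lap {g : EuclideanSpace ℝ (Fin n) → ℝ}
    (hg : ContDiff ℝ (⊤ : ℕ∞) g) : ContDiff ℝ (⊤ : ℕ∞) (lap g) := by
  have : lap g = fun x => ∑ i, pd i (pd i g) x := rfl
  rw [this]
  exact ContDiff.sum fun i _ => smooth_pd (smooth_pd hg)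

lemma supp_sum {g : Fin n → EuclideanSpace ℝ (Fin n) → ℝ} (hg : ∀ j, HasCompactSupport (g j)) :
    HasCompactSupport (fun x => ∑ j, g j x) := by
  classical
  induction (Finset.univ : Finset (Fin n)) using Finset.induction_on with
  | empty =>
    simp only [Finset.sum_empty]
    exact HasCompactSupport.zero
  | insert a s ha ih =>
    simp only [Finset.sum_insert ha]
    exact (hg a).add ih

lemma supp_lap {g : EuclideanSpace ℝ (Fin n) → ℝ}
    (hg : HasCompactSupport g) : HasCompactSupport (lap g) :=
  supp_sum fun _ => supp_pd (supp_pd hg)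

/-- Euler field derivative -/
noncomputable def eul (x₀ : EuclideanSpace ℝ (Fin n)) (v : EuclideanSpace ℝ (Fin n) → ℝ)
    (x : EuclideanSpace ℝ (Fin n)) : ℝ :=
  ∑ j, yc x₀ j x * pd j v x

/-- gradient squared -/
noncomputable def gsq (v : EuclideanSpace ℝ (Fin n) → ℝ)
    (x : EuclideanSpace ℝ (Fin n)) : ℝ :=
  ∑ j, pd j v x * pd j v x

/-- radius squared -/
noncomputable def rsq (x₀ x : EuclideanSpace ℝ (Fin n)) : ℝ :=
  ∑ j, yc x₀ j x * yc x₀ j x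

lemma smooth_eul (x₀ : EuclideanSpace ℝ (Fin n)) {v} (hv : ContDiff ℝ (⊤ : ℕ∞) v) :
    ContDiff ℝ (⊤ : ℕ∞) (eul x₀ v) :=
  ContDiff.sum fun _ _ => (smooth_yc x₀ _).mul (smooth_pd hv)

lemma smooth_gsq {v : EuclideanSpace ℝ (Fin n) → ℝ} (hv : ContDiff ℝ (⊤ : ℕ∞) v) :
    ContDiff ℝ (⊤ : ℕ∞) (gsq v) :=
  ContDiff.sum fun _ _ => (smooth_pd hv).mul (smooth_pd hv)

lemma smooth_rsq (x₀ : EuclideanSpace ℝ (Fin n)) :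
    ContDiff ℝ (⊤ : ℕ∞) (rsq x₀) :=
  ContDiff.sum fun _ _ => (smooth_yc x₀ _).mul (smooth_yc x₀ _)

lemma supp_gsq {v : EuclideanSpace ℝ (Fin n) → ℝ} (hv : HasCompactSupport v) :
    HasCompactSupport (gsq v) :=
  supp_sum fun _ => (supp_pd hv).mul_left

lemma pd_eul (x₀ : EuclideanSpace ℝ (Fin n)) {v} (hv : ContDiff ℝ (⊤ : ℕ∞) v) (i x) :
    pd i (eul x₀ v) x = pd i v x + ∑ j, yc x₀ j x * pd i (pd j v) x := by
  unfold eul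
  rw [pd_sum (g := fun j x => yc x₀ j x * pd j v x)
    (fun j => (smooth_diff (smooth_yc x₀ j)).mul (smooth_diff (smooth_pd hv)))]
  simp_rw [pd_mul (smooth_diff (smooth_yc x₀ _)) (smooth_diff (smooth_pd hv)), pd_yc]
  rw [Finset.sum_add_distrib, add_comm]
  simp

lemma pd_gsq {v : EuclideanSpace ℝ (Fin n) → ℝ} (hv : ContDiff ℝ (⊤ : ℕ∞) v) (i x) :
    pd i (gsq v) x = 2 * ∑ j, pd j v x * pd i (pd j v) x := by
  unfold gsq
  rw [pd_sum (g := fun j x => pd j v x * pd j v x)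
    (fun j => (smooth_diff (smooth_pd hv)).mul (smooth_diff (smooth_pd hv)))]
  simp_rw [pd_mul (smooth_diff (smooth_pd hv)) (smooth_diff (smooth_pd hv))]
  rw [Finset.sum_add_distrib]
  ring

lemma pd_rsq (x₀ : EuclideanSpace ℝ (Fin n)) (i x) :
    pd i (rsq x₀) x = 2 * yc x₀ i x := by
  unfold rsq
  rw [pd_sum (g := fun j x => yc x₀ j x * yc x₀ j x)
    (fun j => (smooth_diff (smooth_yc x₀ j)).mul (smooth_diff (smooth_yc x₀ j)))]
  simp_rw [pd_mul (smooth_diff (smooth_yc x₀ _)) (smooth_diff (smooth_yc x₀ _)), pd_yc]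
  rw [Finset.sum_add_distrib]
  simp
  ring

/-- The vector field. -/
noncomputable def fld (x₀ : EuclideanSpace ℝ (Fin n)) (l a : ℝ)
    (v : EuclideanSpace ℝ (Fin n) → ℝ) (i : Fin n) (x : EuclideanSpace ℝ (Fin n)) : ℝ :=
  -8 * l * (pd i v x * eul x₀ v x) + 4 * l * (yc x₀ i x * gsq v x)
    + -4 * l * n * (v x * pd i v x) + -4 * l ^ 3 * (rsq x₀ x * (v x * (v x * yc x₀ i x)))
    + (-4 * l * a - 8 * l ^ 2) * (v x * (v x * yc x₀ i x))

lemma smooth_fld (x₀ : EuclideanSpace ℝ (Fin n)) (l a : ℝ) {v}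
    (hv : ContDiff ℝ (⊤ : ℕ∞) v) (i : Fin n) : ContDiff ℝ (⊤ : ℕ∞) (fld x₀ l a v i) := by
  have h1 := smooth_eul x₀ hv
  have h2 := smooth_gsq hv
  have h3 := smooth_rsq x₀
  have h4 := smooth_yc x₀ i
  have h5 := smooth_pd (i := i) hv
  unfold fld
  fun_prop

lemma supp_fld (x₀ : EuclideanSpace ℝ (Fin n)) (l a : ℝ) {v}
    (hv : HasCompactSupport v) (i : Fin n) : HasCompactSupport (fld x₀ l a v i) := by
  have h2 := supp_gsq hv
  have h5 := supp_pd (i := i) hv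
  unfold fld
  exact (((((h5.mul_right).mul_left).add ((h2.mul_left).mul_left)).add
    ((hv.mul_right).mul_left)).add (((hv.mul_right).mul_left).mul_left)).add
      ((hv.mul_right).mul_left)

lemma pd_fld (x₀ : EuclideanSpace ℝ (Fin n)) (l a : ℝ) {v}
    (hv : ContDiff ℝ (⊤ : ℕ∞) v) (i : Fin n) (x) : pd i (fld x₀ l a v i) x =
    -8 * l * (pd i (pd i v) x * eul x₀ v x
      + pd i v x * (pd i v x + ∑ j, yc x₀ j x * pd i (pd j v) x))
    + 4 * l * (gsq v x + yc x₀ i x * (2 * ∑ j, pd j v x * pd i (pd j v) x))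
    + -4 * l * n * (pd i v x * pd i v x + v x * pd i (pd i v) x)
    + -4 * l ^ 3 * (2 * v x ^ 2 * (yc x₀ i x * yc x₀ i x)
        + rsq x₀ x * (2 * v x * (yc x₀ i x * pd i v x) + v x ^ 2))
    + (-4 * l * a - 8 * l ^ 2) * (2 * v x * (yc x₀ i x * pd i v x) + v x ^ 2) := by
  have d0 := smooth_diff hv
  have d1 := smooth_diff (smooth_eul x₀ hv)
  have d2 := smooth_diff (smooth_gsq hv)
  have d3 := smooth_diff (smooth_rsq x₀)
  have d4 := smooth_diff (smooth_yc x₀ i)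
  have d5 := smooth_diff (smooth_pd (i := i) hv)
  unfold fld
  rw [pd_add (by fun_prop) (by fun_prop), pd_add (by fun_prop) (by fun_prop),
    pd_add (by fun_prop) (by fun_prop), pd_add (by fun_prop) (by fun_prop),
    pd_const_mul (by fun_prop), pd_const_mul (by fun_prop), pd_const_mul (by fun_prop),
    pd_const_mul (by fun_prop), pd_const_mul (by fun_prop),
    pd_mul d5 d1, pd_mul d4 d2, pd_mul d0 d5, pd_mul d3 (by fun_prop),
    pd_mul d0 (by fun_prop), pd_mul d0 (by fun_prop),
    pd_eul x₀ hv, pd_gsq hv, pd_rsq, pd_yc]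
  simp only [if_true]
  ring

lemma div_fld (x₀ : EuclideanSpace ℝ (Fin n)) (l a : ℝ) {v}
    (hv : ContDiff ℝ (⊤ : ℕ∞) v) (x) : ∑ i, pd i (fld x₀ l a v i) x =
    -8 * l * (lap v x * eul x₀ v x + gsq v x)
    + 4 * l * n * gsq v x
    + -4 * l * n * (gsq v x + v x * lap v x)
    + -4 * l ^ 3 * (2 * v x ^ 2 * rsq x₀ x
        + rsq x₀ x * (2 * v x * eul x₀ v x + n * v x ^ 2))
    + (-4 * l * a - 8 * l ^ 2) * (2 * v x * eul x₀ v x + n * v x ^ 2) := by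
  have hX : ∑ i, pd i v x * ∑ j, yc x₀ j x * pd i (pd j v) x
      = ∑ i, yc x₀ i x * ∑ j, pd j v x * pd i (pd j v) x := by
    simp_rw [Finset.mul_sum]
    rw [Finset.sum_comm]
    refine Finset.sum_congr rfl fun i _ => Finset.sum_congr rfl fun j _ => ?_
    rw [pd_comm hv]; ring
  have hX2 : ∑ i, yc x₀ i x * (2 * ∑ j, pd j v x * pd i (pd j v) x)
      = 2 * ∑ i, yc x₀ i x * ∑ j, pd j v x * pd i (pd j v) x := by
    rw [Finset.mul_sum]
    exact Finset.sum_congr rfl fun i _ => by ring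
  simp_rw [pd_fld x₀ l a hv]
  simp only [Finset.sum_add_distrib, ← Finset.mul_sum, mul_add (pd _ v x), hX, hX2,
    ← Finset.sum_mul, Finset.sum_const, Finset.card_univ, Fintype.card_fin, nsmul_eq_mul]
  rw [← lap_eq, show ∑ i, pd i v x * pd i v x = gsq v x from rfl,
    show ∑ i, yc x₀ i x * yc x₀ i x = rsq x₀ x from rfl,
    show ∑ i, yc x₀ i x * pd i v x = eul x₀ v x from rfl]
  ring

/-- Pointwise inequality. -/
lemma ptw (x₀ : EuclideanSpace ℝ (Fin n)) {l : ℝ} (hl : 0 < l) (a : ℝ) {v}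
    (hv : ContDiff ℝ (⊤ : ℕ∞) v) (x) :
    8 * n * l ^ 2 * v x ^ 2 + ∑ i, pd i (fld x₀ l a v i) x ≤
    (lap v x + l ^ 2 * rsq x₀ x * v x + a * v x - 2 * l * eul x₀ v x - n * l * v x) ^ 2 := by
  have h1 : 0 ≤ gsq v x + l ^ 2 * rsq x₀ x * v x ^ 2 + 2 * l * v x * eul x₀ v x := by
    have : gsq v x + l ^ 2 * rsq x₀ x * v x ^ 2 + 2 * l * v x * eul x₀ v x
        = ∑ i, (pd i v x + l * yc x₀ i x * v x) ^ 2 := by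
      unfold gsq rsq eul
      simp_rw [Finset.mul_sum, Finset.sum_mul]
      rw [← Finset.sum_add_distrib, ← Finset.sum_add_distrib]
      exact Finset.sum_congr rfl fun i _ => by ring
    rw [this]; positivity
  have h2 := mul_nonneg hl.le h1
  have h3 := sq_nonneg (lap v x + l ^ 2 * rsq x₀ x * v x + a * v x + 2 * l * eul x₀ v x
    + n * l * v x)
  rw [div_fld x₀ l a hv]
  linarith

end helpers

section conj

variable {n : ℕ}

/-- The Gaussian factor. -/
noncomputable def gw (x₀ : EuclideanSpace ℝ (Fin n)) (c : ℝ) (x : EuclideanSpace ℝ (Fin n)) : ℝ :=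
  Real.exp (c * rsq x₀ x)

lemma smooth_gw (x₀ : EuclideanSpace ℝ (Fin n)) (c : ℝ) : ContDiff ℝ (⊤ : ℕ∞) (gw x₀ c) := by
  have := smooth_rsq x₀
  unfold gw
  fun_prop

lemma gw_mul_neg (x₀ : EuclideanSpace ℝ (Fin n)) (c : ℝ) (x) : gw x₀ c x * gw x₀ (-c) x = 1 := by
  unfold gw
  rw [← Real.exp_add]; simp

lemma pd_gw (x₀ : EuclideanSpace ℝ (Fin n)) (c : ℝ) (i x) :
    pd i (gw x₀ c) x = 2 * c * (yc x₀ i x * gw x₀ c x) := by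
  have hd : DifferentiableAt ℝ (fun y => c * rsq x₀ y) x :=
    ((smooth_diff (smooth_rsq x₀)).const_mul c) x
  have h1 := pd_const_mul (i := i) (smooth_diff (smooth_rsq x₀)) c x
  rw [pd_rsq] at h1
  unfold pd at h1
  unfold pd gw
  rw [fderiv_exp hd, _root_.smul_apply, h1, smul_eq_mul]
  ring

lemma lap_gw_mul (x₀ : EuclideanSpace ℝ (Fin n)) (l : ℝ) {v} (hv : ContDiff ℝ (⊤ : ℕ∞) v) (x) :
    lap (fun y => gw x₀ (-(l / 2)) y * v y) x = gw x₀ (-(l / 2)) x *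
      (lap v x + l ^ 2 * rsq x₀ x * v x - 2 * l * eul x₀ v x - n * l * v x) := by
  have d0 := smooth_diff hv
  have dw := smooth_diff (smooth_gw x₀ (-(l / 2)))
  have hi : ∀ i, pd i (pd i (fun y => gw x₀ (-(l / 2)) y * v y)) x = gw x₀ (-(l / 2)) x *
      (pd i (pd i v) x + l ^ 2 * v x * (yc x₀ i x * yc x₀ i x)
        - 2 * l * (yc x₀ i x * pd i v x) - l * v x) := by
    intro i
    have d4 := smooth_diff (smooth_yc x₀ i)
    have d5 := smooth_diff (smooth_pd (i := i) hv)
    have h1 : pd i (fun y => gw x₀ (-(l / 2)) y * v y) =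
        fun y => gw x₀ (-(l / 2)) y * (pd i v y + -l * (yc x₀ i y * v y)) := by
      funext y
      rw [pd_mul dw d0, pd_gw]; ring
    rw [h1, pd_mul dw (by fun_prop), pd_gw, pd_add d5 (by fun_prop), pd_const_mul (by fun_prop),
      pd_mul d4 d0, pd_yc]
    simp only [if_true]
    ring
  rw [lap_eq]
  simp_rw [hi]
  simp only [Finset.sum_add_distrib, Finset.sum_sub_distrib, ← Finset.mul_sum, Finset.sum_const,
    Finset.card_univ, Fintype.card_fin, nsmul_eq_mul]
  rw [← lap_eq,
    show ∑ i, yc x₀ i x * yc x₀ i x = rsq x₀ x from rfl,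
    show ∑ i, yc x₀ i x * pd i v x = eul x₀ v x from rfl]
  ring

lemma est (x₀ : EuclideanSpace ℝ (Fin n)) {l : ℝ} (hl : 0 < l) (a : ℝ) {p}
    (hp : ContDiff ℝ (⊤ : ℕ∞) p) (hs : HasCompactSupport p) :
    8 * n * l ^ 2 * ∫ x, (gw x₀ (l / 2) x * p x) ^ 2 ≤
      ∫ x, (gw x₀ (l / 2) x * (lap p x + a * p x)) ^ 2 := by
  set v : EuclideanSpace ℝ (Fin n) → ℝ := fun x => gw x₀ (l / 2) x * p x with hvdef
  have hv : ContDiff ℝ (⊤ : ℕ∞) v := (smooth_gw x₀ (l / 2)).mul hp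
  have hvs : HasCompactSupport v := hs.mul_left
  have hpv : p = fun y => gw x₀ (-(l / 2)) y * v y := by
    funext y
    rw [hvdef]
    have := gw_mul_neg x₀ (l / 2) y
    linear_combination -p y * this
  have hT : ∀ x, gw x₀ (l / 2) x * (lap p x + a * p x) =
      lap v x + l ^ 2 * rsq x₀ x * v x + a * v x - 2 * l * eul x₀ v x - n * l * v x := by
    intro x
    have h1 : lap p x = gw x₀ (-(l / 2)) x *
      (lap v x + l ^ 2 * rsq x₀ x * v x - 2 * l * eul x₀ v x - n * l * v x) := by
      rw [← lap_gw_mul x₀ l hv x, ← hpv]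
    have h2 : p x = gw x₀ (-(l / 2)) x * v x := congrFun hpv x
    have := gw_mul_neg x₀ (l / 2) x
    rw [h1, h2]
    linear_combination (lap v x + l ^ 2 * rsq x₀ x * v x + a * v x - 2 * l * eul x₀ v x
      - n * l * v x) * this
  have i1 : Integrable (fun x => v x ^ 2) := by
    have : Continuous (fun x => v x ^ 2) := hv.continuous.pow 2
    refine this.integrable_of_hasCompactSupport ?_
    simp_rw [sq]
    exact hvs.mul_left
  have i2 : ∀ i, Integrable (pd i (fld x₀ l a v i)) := fun i =>
    (smooth_pd (smooth_fld x₀ l a hv i)).continuous.integrable_of_hasCompactSupport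
      (supp_pd (supp_fld x₀ l a hvs i))
  have i3 : Integrable (fun x => (gw x₀ (l / 2) x * (lap p x + a * p x)) ^ 2) := by
    have : Continuous (fun x => (gw x₀ (l / 2) x * (lap p x + a * p x)) ^ 2) := by
      have c1 := (smooth_gw x₀ (l / 2)).continuous
      have c2 := (smooth_lap hp).continuous
      have c3 := hp.continuous
      fun_prop
    refine this.integrable_of_hasCompactSupport ?_
    simp_rw [sq]
    exact (((supp_lap hs).add hs.mul_left).mul_left).mul_left
  have i4 : Integrable (fun x => ∑ i, pd i (fld x₀ l a v i) x) :=
    integrable_finsetSum _ fun i _ => i2 i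
  calc 8 * n * l ^ 2 * ∫ x, v x ^ 2
      = ∫ x, (8 * n * l ^ 2 * v x ^ 2 + ∑ i, pd i (fld x₀ l a v i) x) := by
        rw [integral_add (i1.const_mul _) i4, integral_finsetSum _ fun i _ => i2 i,
          integral_const_mul]
        simp_rw [integral_pd (smooth_fld x₀ l a hv _) (supp_fld x₀ l a hvs _)]
        simp
    _ ≤ _ := by
        refine integral_mono ((i1.const_mul _).add i4) i3 fun x => ?_
        simp only [hT]
        exact ptw x₀ hl a hv x

end conj

section abstr

lemma riesz_ext {V H : Type*} [AddCommGroup V] [Module ℝ V] [NormedAddCommGroup H]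
    [InnerProductSpace ℝ H] [CompleteSpace H] (T : V →ₗ[ℝ] H) (L : V →ₗ[ℝ] ℝ) (M : ℝ)
    (hM : 0 ≤ M) (h : ∀ v, |L v| ≤ M * ‖T v‖) :
    ∃ U : H, ‖U‖ ≤ M ∧ ∀ v, inner ℝ U (T v) = L v := by
  have hker : LinearMap.ker T ≤ LinearMap.ker L := by
    intro v hv
    rw [LinearMap.mem_ker] at hv ⊢
    have := h v
    rw [hv, norm_zero, mul_zero] at this
    exact abs_nonpos_iff.1 this
  let L' : LinearMap.range T →ₗ[ℝ] ℝ :=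
    ((LinearMap.ker T).liftQ L hker) ∘ₗ (T.quotKerEquivRange.symm : _ →ₗ[ℝ] _)
  have hL' : ∀ v, L' ⟨T v, LinearMap.mem_range_self T v⟩ = L v := by
    intro v
    have : T.quotKerEquivRange.symm ⟨T v, LinearMap.mem_range_self T v⟩
        = (LinearMap.ker T).mkQ v := T.quotKerEquivRange_symm_apply_image v _
    simp [L', this]
  have hb : ∀ z : LinearMap.range T, ‖L' z‖ ≤ M * ‖z‖ := by
    rintro ⟨_, v, rfl⟩
    rw [hL']
    exact h v
  obtain ⟨g, hg1, hg2⟩ := exists_extension_norm_eq (LinearMap.range T)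
    (L'.mkContinuous M hb)
  refine ⟨(InnerProductSpace.toDual ℝ H).symm g, ?_, fun v => ?_⟩
  · rw [LinearIsometryEquiv.norm_map, hg2]
    exact LinearMap.mkContinuous_norm_le _ hM _
  · rw [InnerProductSpace.toDual_symm_apply]
    rw [← hL' v]
    exact hg1 ⟨T v, LinearMap.mem_range_self T v⟩

variable {α : Type*} [MeasurableSpace α] {μ : Measure α}

lemma inner_lp {g h : α → ℝ} (hg : MemLp g 2 μ) (hh : MemLp h 2 μ) :
    inner ℝ (hg.toLp g) (hh.toLp h) = ∫ x, g x * h x ∂μ := by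
  rw [L2.inner_def]
  refine integral_congr_ae ?_
  filter_upwards [hg.coeFn_toLp, hh.coeFn_toLp] with x h1 h2
  rw [h1, h2]
  simp [mul_comm]

lemma norm_lp {g : α → ℝ} (hg : MemLp g 2 μ) :
    ‖hg.toLp g‖ ^ 2 = ∫ x, g x ^ 2 ∂μ := by
  rw [← real_inner_self_eq_norm_sq, inner_lp]
  simp_rw [sq]

end abstr

section lapl
variable {n : ℕ}

lemma lap_add {p q : EuclideanSpace ℝ (Fin n) → ℝ} (hp : ContDiff ℝ (⊤ : ℕ∞) p)
    (hq : ContDiff ℝ (⊤ : ℕ∞) q) (x) : lap (p + q) x = lap p x + lap q x := by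
  simp only [lap_eq]
  rw [← Finset.sum_add_distrib]
  refine Finset.sum_congr rfl fun i _ => ?_
  have : pd i (p + q) = fun y => pd i p y + pd i q y :=
    funext fun y => pd_add (smooth_diff hp) (smooth_diff hq) y
  rw [this, pd_add (smooth_diff (smooth_pd hp)) (smooth_diff (smooth_pd hq))]

lemma lap_smul {p : EuclideanSpace ℝ (Fin n) → ℝ} (hp : ContDiff ℝ (⊤ : ℕ∞) p)
    (c : ℝ) (x) : lap (c • p) x = c * lap p x := by
  simp only [lap_eq]
  rw [Finset.mul_sum]
  refine Finset.sum_congr rfl fun i _ => ?_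
  have : pd i (c • p) = fun y => c * pd i p y :=
    funext fun y => pd_const_mul (smooth_diff hp) c y
  rw [this, pd_const_mul (smooth_diff (smooth_pd hp))]

/-- Test functions. -/
def testSp (n : ℕ) : Submodule ℝ (EuclideanSpace ℝ (Fin n) → ℝ) where
  carrier := {p | ContDiff ℝ (⊤ : ℕ∞) p ∧ HasCompactSupport p}
  add_mem' := fun ha hb => ⟨ha.1.add hb.1, ha.2.add hb.2⟩
  zero_mem' := ⟨contDiff_const, HasCompactSupport.zero⟩
  smul_mem' := fun c p hp => ⟨contDiff_const.smul hp.1,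
    (hp.2.mul_left : HasCompactSupport (fun x => c * p x))⟩

lemma memLp_T (x₀ : EuclideanSpace ℝ (Fin n)) (l a : ℝ) {p}
    (hp : p ∈ testSp n) : MemLp (fun x => gw x₀ l x * (lap p x + a * p x)) 2 volume := by
  have c1 := (smooth_gw x₀ l).continuous
  have c2 := (smooth_lap hp.1).continuous
  have c3 := hp.1.continuous
  have : Continuous (fun x => gw x₀ l x * (lap p x + a * p x)) := by fun_prop
  exact this.memLp_of_hasCompactSupport (((supp_lap hp.2).add hp.2.mul_left).mul_left)

lemma memLp_W (x₀ : EuclideanSpace ℝ (Fin n)) (l : ℝ) {p}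
    (hp : p ∈ testSp n) : MemLp (fun x => gw x₀ l x * p x) 2 volume := by
  have c1 := (smooth_gw x₀ l).continuous
  have c3 := hp.1.continuous
  have : Continuous (fun x => gw x₀ l x * p x) := by fun_prop
  exact this.memLp_of_hasCompactSupport hp.2.mul_left

/-- The conjugated operator. -/
noncomputable def opT (x₀ : EuclideanSpace ℝ (Fin n)) (l a : ℝ) :
    testSp n →ₗ[ℝ] Lp ℝ 2 (volume : Measure (EuclideanSpace ℝ (Fin n))) where
  toFun p := (memLp_T x₀ l a p.2).toLp _
  map_add' p q := by
    rw [← MemLp.toLp_add]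
    refine MemLp.toLp_congr _ _ (Filter.Eventually.of_forall fun x => ?_)
    have := lap_add p.2.1 q.2.1 x
    simp only [Submodule.coe_add, Pi.add_apply, this]
    ring
  map_smul' c p := by
    rw [RingHom.id_apply, ← MemLp.toLp_const_smul]
    refine MemLp.toLp_congr _ _ (Filter.Eventually.of_forall fun x => ?_)
    have := lap_smul p.2.1 c x
    simp only [Submodule.coe_smul, Pi.smul_apply, this, smul_eq_mul]
    ring

lemma int_f {f : EuclideanSpace ℝ (Fin n) → ℝ} (hf : LocallyIntegrable f volume) {p}
    (hp : p ∈ testSp n) : Integrable (fun x => f x * p x) volume := by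
  have := hf.integrable_smul_left_of_hasCompactSupport hp.1.continuous hp.2
  simpa [mul_comm] using this

/-- The functional. -/
noncomputable def opL {f : EuclideanSpace ℝ (Fin n) → ℝ} (hf : LocallyIntegrable f volume) :
    testSp n →ₗ[ℝ] ℝ where
  toFun p := ∫ x, f x * (p : EuclideanSpace ℝ (Fin n) → ℝ) x
  map_add' p q := by
    rw [← integral_add (int_f hf p.2) (int_f hf q.2)]
    refine integral_congr_ae (Filter.Eventually.of_forall fun x => ?_)
    simp [mul_add]
  map_smul' c p := by
    rw [RingHom.id_apply, smul_eq_mul, ← integral_const_mul]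
    refine integral_congr_ae (Filter.Eventually.of_forall fun x => ?_)
    simp; ring

end lapl

theorem stmt11 (n : ℕ) (hn : 0 < n) (lam a : ℝ) (hlam : 0 < lam)
    (x₀ : EuclideanSpace ℝ (Fin n)) (f : EuclideanSpace ℝ (Fin n) → ℝ)
    (hf : LocallyIntegrable f volume)
    (hf2 : Integrable (fun x => f x ^ 2 * Real.exp (-(lam * ‖x - x₀‖ ^ 2))) volume) :
    ∃ u : EuclideanSpace ℝ (Fin n) → ℝ,
      LocallyIntegrable u volume ∧
      Integrable (fun x => u x ^ 2 * Real.exp (-(lam * ‖x - x₀‖ ^ 2))) volume ∧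
      IsWeakSolution a u f ∧
      ∫ x, u x ^ 2 * Real.exp (-(lam * ‖x - x₀‖ ^ 2)) ≤
        (1 / (8 * n * lam ^ 2)) * ∫ x, f x ^ 2 * Real.exp (-(lam * ‖x - x₀‖ ^ 2)) := by
  have hexp : ∀ x, Real.exp (-(lam * ‖x - x₀‖ ^ 2)) = gw x₀ (-(lam / 2)) x ^ 2 := by
    intro x
    rw [normsq_yc, gw, ← Real.exp_nat_mul]
    congr 1
    simp only [rsq]
    push_cast
    ring
  simp only [hexp, ← mul_pow] at hf2 ⊢
  have hn' : (0 : ℝ) < n := by exact_mod_cast hn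
  have hK : (0 : ℝ) < 8 * n * lam ^ 2 := by positivity
  have cw := fun c => (smooth_gw x₀ c).continuous
  have hg : MemLp (fun x => f x * gw x₀ (-(lam / 2)) x) 2 volume := by
    rw [memLp_two_iff_integrable_sq]
    · exact hf2
    · exact hf.aestronglyMeasurable.mul (cw _).aestronglyMeasurable
  set g := hg.toLp _ with hgdef
  obtain ⟨U, hU1, hU2⟩ := riesz_ext (opT x₀ (lam / 2) a) (opL hf)
    (‖g‖ / √(8 * n * lam ^ 2)) (by positivity) (by
      intro p
      have h1 : opL hf p = inner ℝ g ((memLp_W x₀ (lam / 2) p.2).toLp _) := by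
        rw [hgdef, inner_lp]
        refine integral_congr_ae (Filter.Eventually.of_forall fun x => ?_)
        have := gw_mul_neg x₀ (lam / 2) x
        simp only
        linear_combination -(f x * (p : EuclideanSpace ℝ (Fin n) → ℝ) x) * this
      have h2 : √(8 * n * lam ^ 2) * ‖(memLp_W x₀ (lam / 2) p.2).toLp _‖
          ≤ ‖opT x₀ (lam / 2) a p‖ := by
        refine le_of_sq_le_sq ?_ (norm_nonneg _)
        rw [mul_pow, Real.sq_sqrt hK.le, norm_lp]
        change _ ≤ ‖(memLp_T x₀ (lam / 2) a p.2).toLp _‖ ^ 2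
        rw [norm_lp]
        exact est x₀ hlam a p.2.1 p.2.2
      rw [h1]
      refine (abs_real_inner_le_norm _ _).trans ?_
      rw [div_mul_eq_mul_div, le_div_iff₀ (by positivity)]
      calc _ = ‖g‖ * (√(8 * n * lam ^ 2) * ‖(memLp_W x₀ (lam / 2) p.2).toLp _‖) := by ring
        _ ≤ _ := mul_le_mul_of_nonneg_left h2 (norm_nonneg _))
  have hUm : MemLp (U : EuclideanSpace ℝ (Fin n) → ℝ) 2 volume := Lp.memLp U
  have hcancel : ∀ x, U x * gw x₀ (lam / 2) x * gw x₀ (-(lam / 2)) x = U x := by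
    intro x
    have := gw_mul_neg x₀ (lam / 2) x
    linear_combination U x * this
  have hUn : ‖U‖ ^ 2 = ∫ x, U x ^ 2 := by
    have := norm_lp hUm
    rwa [Lp.toLp_coeFn] at this
  refine ⟨fun x => U x * gw x₀ (lam / 2) x, ?_, ?_, ?_, ?_⟩
  · have h1 : LocallyIntegrable (U : EuclideanSpace ℝ (Fin n) → ℝ) volume :=
      hUm.locallyIntegrable (by norm_num)
    have := h1.continuous_smul (cw (lam / 2))
    simpa [mul_comm] using this
  · simp only [hcancel]
    exact hUm.integrable_sq
  · intro p hp hs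
    have h1 := hU2 ⟨p, hp, hs⟩
    change inner ℝ U ((memLp_T x₀ (lam / 2) a (p := p) ⟨hp, hs⟩).toLp _) = ∫ x, f x * p x at h1
    rw [← h1, ← Lp.toLp_coeFn U hUm, inner_lp]
    refine integral_congr_ae ?_
    filter_upwards [hUm.coeFn_toLp] with x hx
    rw [hx]
    ring
  · simp only [hcancel]
    rw [← hUn, ← norm_lp hg]
    calc ‖U‖ ^ 2 ≤ (‖g‖ / √(8 * n * lam ^ 2)) ^ 2 := by gcongr
      _ = _ := by
        rw [div_pow, Real.sq_sqrt hK.le]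
        ring
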